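/- arXiv:1606.07384 — 6 statements merged into one kernel-verified Lean document; each statement's English description precedes it below -/
import Mathlib

section
/- Let p, q ∈ [0,1]^S be conditional probability tables with 0 < p_k + q_k < 2 for every k ∈ {1,…,m}, and let P = P_p and Q = P_q be the corresponding Bayesian networks. Then d_H(P,Q)² ≤ 2·Σ_{k=1}^m √(Pr_P[Π_k]·Pr_Q[Π_k]) · (p_k − q_k)² / ((p_k + q_k)·(2 − p_k − q_k)). -/
open scoped BigOperators Classical

/-- The index set `S` of parental configurations: pairs `(i, a)` where
`a : Parents i → Bool`. -/
abbrev BNIdx (d : ℕ) (Par : Fin d → Finset (Fin d)) :=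
  (i : Fin d) × ({j : Fin d // j ∈ Par i} → Bool)

/-- The restriction of `x ∈ {0,1}^d` to the parents of node `i`. -/
def cfgOf {d : ℕ} (Par : Fin d → Finset (Fin d)) (x : Fin d → Bool) (i : Fin d) :
    {j : Fin d // j ∈ Par i} → Bool :=
  fun j => x j.1

/-- The Bayesian network `P_p` with conditional probability table `p`. -/
noncomputable def bnDist {d : ℕ} (Par : Fin d → Finset (Fin d))
    (p : BNIdx d Par → ℝ) (x : Fin d → Bool) : ℝ :=
  ∏ i : Fin d, if x i then p ⟨i, cfgOf Par x i⟩ else 1 - p ⟨i, cfgOf Par x i⟩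

/-- `Pr_R[Π_k]`, the probability of the parental configuration `k` under `R`. -/
noncomputable def prCfg {d : ℕ} (Par : Fin d → Finset (Fin d))
    (R : (Fin d → Bool) → ℝ) (k : BNIdx d Par) : ℝ :=
  ∑ x : Fin d → Bool, if cfgOf Par x k.1 = k.2 then R x else 0

/-- Probability of an event `A` under `R`. -/
noncomputable def prEvent {d : ℕ} (R : (Fin d → Bool) → ℝ)
    (A : (Fin d → Bool) → Prop) : ℝ :=
  ∑ x : Fin d → Bool, if A x then R x else 0

/-- Expectation `E_{X ∼ R}[g(X)]`. -/
noncomputable def expec {d : ℕ} (R : (Fin d → Bool) → ℝ)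
    (g : (Fin d → Bool) → ℝ) : ℝ :=
  ∑ x : Fin d → Bool, R x * g x

/-- The vector `F(x, q) ∈ ℝ^S`. -/
noncomputable def Fvec {d : ℕ} (Par : Fin d → Finset (Fin d))
    (x : Fin d → Bool) (q : BNIdx d Par → ℝ) (k : BNIdx d Par) : ℝ :=
  if cfgOf Par x k.1 = k.2 then (if x k.1 then 1 else 0) else q k

/-- `R` is a probability distribution on the finite set `D`. -/
def IsProbDist {D : Type*} [Fintype D] (R : D → ℝ) : Prop :=
  (∀ x, 0 ≤ R x) ∧ ∑ x, R x = 1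

/-- Total variation distance. -/
noncomputable def dTV {D : Type*} [Fintype D] (A B : D → ℝ) : ℝ :=
  (∑ x, |A x - B x|) / 2

/-- Squared Hellinger distance `d_H(A,B)² = 1 - Σ √(A(x)·B(x))`. -/
noncomputable def hellingerSq {D : Type*} [Fintype D] (A B : D → ℝ) : ℝ :=
  1 - ∑ x, Real.sqrt (A x * B x)

/-- Euclidean norm on `ℝ^ι`. -/
noncomputable def enorm2 {ι : Type*} [Fintype ι] (v : ι → ℝ) : ℝ :=
  Real.sqrt (∑ k, v k ^ 2)

/-- The second-moment matrix `M_R` (relative to `q`). -/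
noncomputable def covM {d : ℕ} (Par : Fin d → Finset (Fin d))
    (R : (Fin d → Bool) → ℝ) (q : BNIdx d Par → ℝ) :
    Matrix (BNIdx d Par) (BNIdx d Par) ℝ :=
  fun k l => expec R (fun x => (Fvec Par x q k - q k) * (Fvec Par x q l - q l))

/-- `M_R^0`: the matrix `M_R` with zeroed diagonal. -/
noncomputable def covM0 {d : ℕ} (Par : Fin d → Finset (Fin d))
    (R : (Fin d → Bool) → ℝ) (q : BNIdx d Par → ℝ) :
    Matrix (BNIdx d Par) (BNIdx d Par) ℝ :=
  fun k l => if k = l then 0 else covM Par R q k l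

/-- Spectral norm (ℓ²-operator norm) of a real matrix. -/
noncomputable def specNorm {ι : Type*} [Fintype ι] [DecidableEq ι]
    (M : Matrix ι ι ℝ) : ℝ :=
  ‖Matrix.toEuclideanCLM (𝕜 := ℝ) M‖



def LocalW {d : ℕ} (f : Fin d → (Fin d → Bool) → ℝ) : Prop :=
  ∀ i x y, (∀ j, j ≤ i → x j = y j) → f i x = f i y

noncomputable def GW {d : ℕ} (f : Fin d → (Fin d → Bool) → ℝ) (n : ℕ) (x : Fin d → Bool) : ℝ :=
  ∏ i : Fin d, if i.val < n then f i x else 1 / 2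

lemma sum_update {d : ℕ} (F : (Fin d → Bool) → ℝ) (n : Fin d) :
    ∑ x, F x = (∑ x, (F (Function.update x n true) + F (Function.update x n false))) / 2 := by
  have hinv : Function.Involutive
      (fun x : Fin d → Bool => Function.update x n (!(x n))) := by
    intro x; simp
  have h1 : ∑ x, F (Function.update x n (!(x n))) = ∑ x, F x :=
    Equiv.sum_comp hinv.toPerm F
  have h2 : ∑ x, (F (Function.update x n true) + F (Function.update x n false))
      = ∑ x, (F x + F (Function.update x n (!(x n)))) := by
    refine Finset.sum_congr rfl fun x _ => ?_
    have hx : Function.update x n (x n) = x := Function.update_eq_self n x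
    cases h : x n <;> rw [h] at hx <;> simp [hx, add_comm]
  rw [h2, Finset.sum_add_distrib, h1]; ring

lemma GW_update {d : ℕ} (f : Fin d → (Fin d → Bool) → ℝ) (hf : LocalW f) (n : Fin d) (b : Bool)
    (x : Fin d → Bool) :
    GW f (n.val + 1) (Function.update x n b) = 2 * (GW f n.val x * f n (Function.update x n b)) := by
  unfold GW
  rw [← Finset.mul_prod_erase _ _ (Finset.mem_univ n), ← Finset.mul_prod_erase _
    (fun i : Fin d => if i.val < n.val then f i x else 1 / 2) (Finset.mem_univ n)]
  have : ∏ i ∈ Finset.univ.erase n, (if i.val < n.val + 1 then f i (Function.update x n b) else 1 / 2)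
      = ∏ i ∈ Finset.univ.erase n, (if i.val < n.val then f i x else 1 / 2) := by
    refine Finset.prod_congr rfl fun i hi => ?_
    have hne : i ≠ n := Finset.ne_of_mem_erase hi
    have hne' : i.val ≠ n.val := fun h => hne (Fin.ext h)
    by_cases h : i.val < n.val
    · rw [if_pos h, if_pos (by omega)]
      apply hf
      intro j hj
      have : j ≠ n := by rintro rfl; exact absurd hj (not_le.2 h)
      simp [this]
    · rw [if_neg h, if_neg (by omega)]
  rw [this]
  simp
  ring

lemma sum_GW_succ {d : ℕ} (f : Fin d → (Fin d → Bool) → ℝ) (hf : LocalW f) (n : Fin d)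
    (g : (Fin d → Bool) → ℝ) (hg : ∀ x b, g (Function.update x n b) = g x) :
    ∑ x, g x * GW f (n.val + 1) x =
      ∑ x, g x * GW f n.val x * (f n (Function.update x n true) + f n (Function.update x n false)) := by
  rw [sum_update _ n, Finset.sum_div]
  refine Finset.sum_congr rfl fun x _ => ?_
  rw [GW_update f hf, GW_update f hf, hg, hg]; ring

lemma sum_GW_stable {d : ℕ} (f : Fin d → (Fin d → Bool) → ℝ) (hf : LocalW f)
    (h1 : ∀ n x, f n (Function.update x n true) + f n (Function.update x n false) = 1)
    (n m : ℕ) (hnm : n ≤ m) (hm : m ≤ d)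
    (g : (Fin d → Bool) → ℝ) (hg : ∀ (i : Fin d) x b, n ≤ i.val → g (Function.update x i b) = g x) :
    ∑ x, g x * GW f m x = ∑ x, g x * GW f n x := by
  induction m, hnm using Nat.le_induction with
  | base => rfl
  | succ m hnm ih =>
    rw [← ih (by omega)]
    have := sum_GW_succ f hf ⟨m, by omega⟩ g (fun x b => hg _ x b hnm)
    simpa [h1] using this

noncomputable def fW {d : ℕ} (Par : Fin d → Finset (Fin d))
    (p : BNIdx d Par → ℝ) (i : Fin d) (x : Fin d → Bool) : ℝ :=
  if x i then p ⟨i, cfgOf Par x i⟩ else 1 - p ⟨i, cfgOf Par x i⟩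

lemma cfg_congr {d : ℕ} (Par : Fin d → Finset (Fin d))
    (hpar : ∀ i : Fin d, ∀ j ∈ Par i, j < i) (i : Fin d) (x y : Fin d → Bool)
    (h : ∀ j, j < i → x j = y j) : cfgOf Par x i = cfgOf Par y i := by
  funext j; exact h _ (hpar i _ j.2)

lemma cfg_update {d : ℕ} (Par : Fin d → Finset (Fin d))
    (hpar : ∀ i : Fin d, ∀ j ∈ Par i, j < i) (i n : Fin d) (hin : i.val ≤ n.val) (x : Fin d → Bool)
    (b : Bool) : cfgOf Par (Function.update x n b) i = cfgOf Par x i := by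
  apply cfg_congr Par hpar
  intro j hj
  have : j ≠ n := by rintro rfl; exact absurd hj (not_lt.2 hin)
  simp [this]

lemma fW_local {d : ℕ} (Par : Fin d → Finset (Fin d))
    (hpar : ∀ i : Fin d, ∀ j ∈ Par i, j < i) (p : BNIdx d Par → ℝ) : LocalW (fW Par p) := by
  intro i x y h
  unfold fW
  rw [h i le_rfl, cfg_congr Par hpar i x y fun j hj => h j hj.le]

lemma fW_nonneg {d : ℕ} (Par : Fin d → Finset (Fin d)) (p : BNIdx d Par → ℝ)
    (hp : ∀ k, p k ∈ Set.Icc (0:ℝ) 1) (i : Fin d) (x : Fin d → Bool) : 0 ≤ fW Par p i x := by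
  unfold fW
  split_ifs
  · exact (hp _).1
  · linarith [(hp ⟨i, cfgOf Par x i⟩).2]

lemma GW_nonneg {d : ℕ} (f : Fin d → (Fin d → Bool) → ℝ) (hf : ∀ i x, 0 ≤ f i x) (n : ℕ)
    (x : Fin d → Bool) : 0 ≤ GW f n x := by
  unfold GW
  refine Finset.prod_nonneg fun i _ => ?_
  split_ifs
  · exact hf _ _
  · norm_num

lemma sqrt_prod_fin {ι : Type*} (s : Finset ι) (f : ι → ℝ) (hf : ∀ i, 0 ≤ f i) :
    Real.sqrt (∏ i ∈ s, f i) = ∏ i ∈ s, Real.sqrt (f i) := by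
  induction s using Finset.induction_on with
  | empty => simp
  | insert a s ha ih => rw [Finset.prod_insert ha, Finset.prod_insert ha, Real.sqrt_mul (hf a), ih]

lemma GW_sqrt {d : ℕ} (f g : Fin d → (Fin d → Bool) → ℝ) (hf : ∀ i x, 0 ≤ f i x)
    (hg : ∀ i x, 0 ≤ g i x) (n : ℕ) (x : Fin d → Bool) :
    GW (fun i x => Real.sqrt (f i x * g i x)) n x = Real.sqrt (GW f n x * GW g n x) := by
  unfold GW
  rw [← Finset.prod_mul_distrib, sqrt_prod_fin]
  · refine Finset.prod_congr rfl fun i _ => ?_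
    split_ifs
    · rfl
    · rw [Real.sqrt_mul_self (by norm_num)]
  · intro i
    split_ifs
    · exact mul_nonneg (hf _ _) (hg _ _)
    · norm_num

lemma GW_full {d : ℕ} (Par : Fin d → Finset (Fin d)) (p : BNIdx d Par → ℝ) (x : Fin d → Bool) :
    GW (fW Par p) d x = bnDist Par p x := by
  simp [GW, fW, bnDist]

lemma prCfg_eq {d : ℕ} (Par : Fin d → Finset (Fin d))
    (hpar : ∀ i : Fin d, ∀ j ∈ Par i, j < i) (p : BNIdx d Par → ℝ) (n : Fin d)
    (a : {j : Fin d // j ∈ Par n} → Bool) :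
    prCfg Par (bnDist Par p) ⟨n, a⟩ = ∑ x, if cfgOf Par x n = a then GW (fW Par p) n.val x else 0 := by
  have := sum_GW_stable (fW Par p) (fW_local Par hpar p)
    (by intro n x; simp [fW, cfg_update Par hpar n n le_rfl]) n.val d n.2.le le_rfl
    (fun x => if cfgOf Par x n = a then 1 else 0)
    (by intro i x b hi; simp only [cfg_update Par hpar n i hi])
  simpa [prCfg, GW_full] using this

lemma scalar_bound (p q : ℝ) (hp : 0 ≤ p) (hp1 : p ≤ 1) (hq : 0 ≤ q) (hq1 : q ≤ 1)
    (h0 : 0 < p + q) (h2 : p + q < 2) :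
    1 - (Real.sqrt (p * q) + Real.sqrt ((1 - p) * (1 - q))) ≤
      (p - q) ^ 2 / ((p + q) * (2 - p - q)) := by
  have key : ∀ u v : ℝ, 0 ≤ u → 0 ≤ v → 0 < u + v →
      (u + v) / 2 - Real.sqrt (u * v) ≤ (u - v) ^ 2 / (2 * (u + v)) := by
    intro u v hu hv huv
    rw [le_div_iff₀ (by positivity)]
    have hs := Real.sq_sqrt (mul_nonneg hu hv)
    have hs0 := Real.sqrt_nonneg (u * v)
    have ham : Real.sqrt (u * v) ≤ (u + v) / 2 := by
      rw [Real.sqrt_le_left (by positivity)]; nlinarith [sq_nonneg (u - v)]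
    nlinarith [mul_nonneg hs0 (sub_nonneg.2 ham)]
  have k1 := key p q hp hq h0
  have k2 := key (1 - p) (1 - q) (by linarith) (by linarith) (by linarith)
  have e : (p - q) ^ 2 / ((p + q) * (2 - p - q)) = (p - q) ^ 2 / (2 * (p + q)) +
      ((1 - p) - (1 - q)) ^ 2 / (2 * ((1 - p) + (1 - q))) := by
    have a1 : p + q ≠ 0 := h0.ne'
    have a2 : 2 - p - q ≠ 0 := by linarith
    have a3 : (1 - p) + (1 - q) = 2 - p - q := by ring
    rw [a3]; field_simp; ring
  rw [e]; linarith

lemma step_bound {d : ℕ} (Par : Fin d → Finset (Fin d))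
    (hpar : ∀ i : Fin d, ∀ j ∈ Par i, j < i)
    (p q : BNIdx d Par → ℝ)
    (hp : ∀ k, p k ∈ Set.Icc (0:ℝ) 1) (hq : ∀ k, q k ∈ Set.Icc (0:ℝ) 1)
    (hpq : ∀ k, 0 < p k + q k ∧ p k + q k < 2) (c : BNIdx d Par → ℝ)
    (hc : ∀ k, c k = (p k - q k) ^ 2 / ((p k + q k) * (2 - p k - q k)))
    (r : Fin d → (Fin d → Bool) → ℝ)
    (hr : r = fun i x => Real.sqrt (fW Par p i x * fW Par q i x)) (n : Fin d) :
    (∑ x, GW r n.val x) - ∑ x, GW r (n.val + 1) x ≤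
      ∑ a, Real.sqrt (prCfg Par (bnDist Par p) ⟨n, a⟩ * prCfg Par (bnDist Par q) ⟨n, a⟩) *
        c ⟨n, a⟩ := by
  have hfp := fW_nonneg Par p hp
  have hfq := fW_nonneg Par q hq
  have hloc : LocalW r := by
    intro i x y h
    rw [hr]
    simp only
    rw [fW_local Par hpar p i x y h, fW_local Par hpar q i x y h]
  have hG : ∀ x, GW r n.val x = Real.sqrt (GW (fW Par p) n.val x * GW (fW Par q) n.val x) := by
    intro x; rw [hr]; exact GW_sqrt _ _ hfp hfq _ _
  have hc0 : ∀ k, 0 ≤ c k := fun k => by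
    rw [hc]; exact div_nonneg (sq_nonneg _) (mul_nonneg (hpq k).1.le (by linarith [(hpq k).2]))
  have hs := sum_GW_succ r hloc n (fun _ => 1) (fun _ _ => rfl)
  simp only [one_mul] at hs
  rw [hs, ← Finset.sum_sub_distrib]
  have h1 : ∀ x, GW r n.val x - GW r n.val x *
      (r n (Function.update x n true) + r n (Function.update x n false)) ≤
      GW r n.val x * c ⟨n, cfgOf Par x n⟩ := by
    intro x
    have h0 : 0 ≤ GW r n.val x := by rw [hG]; exact Real.sqrt_nonneg _
    have hb := scalar_bound (p ⟨n, cfgOf Par x n⟩) (q ⟨n, cfgOf Par x n⟩) (hp _).1 (hp _).2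
      (hq _).1 (hq _).2 (hpq _).1 (hpq _).2
    rw [← hc] at hb
    have he : r n (Function.update x n true) + r n (Function.update x n false) =
        Real.sqrt (p ⟨n, cfgOf Par x n⟩ * q ⟨n, cfgOf Par x n⟩) +
        Real.sqrt ((1 - p ⟨n, cfgOf Par x n⟩) * (1 - q ⟨n, cfgOf Par x n⟩)) := by
      rw [hr]; simp [fW, cfg_update Par hpar n n le_rfl]
    rw [he]
    nlinarith [mul_le_mul_of_nonneg_left hb h0]
  refine (Finset.sum_le_sum fun x _ => h1 x).trans ?_
  have h2 : ∑ x, GW r n.val x * c ⟨n, cfgOf Par x n⟩ =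
      ∑ a, (∑ x, if cfgOf Par x n = a then GW r n.val x else 0) * c ⟨n, a⟩ := by
    simp_rw [Finset.sum_mul]
    rw [Finset.sum_comm]
    refine Finset.sum_congr rfl fun x _ => ?_
    simp [ite_mul]
  rw [h2]
  refine Finset.sum_le_sum fun a _ => mul_le_mul_of_nonneg_right ?_ (hc0 _)
  rw [prCfg_eq Par hpar, prCfg_eq Par hpar]
  have nn : ∀ (f : Fin d → (Fin d → Bool) → ℝ), (∀ i x, 0 ≤ f i x) → ∀ x,
      0 ≤ if cfgOf Par x n = a then GW f n.val x else 0 := by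
    intro f hf x
    split_ifs
    · exact GW_nonneg f hf _ _
    · exact le_rfl
  have cs := Real.sum_sqrt_mul_sqrt_le Finset.univ (nn _ hfp) (nn _ hfq)
  rw [← Real.sqrt_mul (Finset.sum_nonneg fun x _ => nn _ hfp x)] at cs
  refine le_trans (le_of_eq ?_) cs
  refine Finset.sum_congr rfl fun x _ => ?_
  split_ifs
  · rw [hG, Real.sqrt_mul (GW_nonneg _ hfp _ _)]
  · simp

theorem hellinger_sq_le_sum_over_configs
    (d : ℕ) (hd : 1 ≤ d) (Par : Fin d → Finset (Fin d))
    (hpar : ∀ i : Fin d, ∀ j ∈ Par i, j < i)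
    (p q : BNIdx d Par → ℝ)
    (hp : ∀ k, p k ∈ Set.Icc (0:ℝ) 1) (hq : ∀ k, q k ∈ Set.Icc (0:ℝ) 1)
    (hpq : ∀ k, 0 < p k + q k ∧ p k + q k < 2) :
    hellingerSq (bnDist Par p) (bnDist Par q) ≤
      2 * ∑ k : BNIdx d Par,
        Real.sqrt (prCfg Par (bnDist Par p) k * prCfg Par (bnDist Par q) k) *
          ((p k - q k) ^ 2 / ((p k + q k) * (2 - p k - q k))) := by
  set c : BNIdx d Par → ℝ := fun k => (p k - q k) ^ 2 / ((p k + q k) * (2 - p k - q k)) with hcdef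
  set r : Fin d → (Fin d → Bool) → ℝ :=
    fun i x => Real.sqrt (fW Par p i x * fW Par q i x) with hr
  have hstep := step_bound Par hpar p q hp hq hpq c (fun _ => rfl) r hr
  have hc0 : ∀ k, 0 ≤ c k := fun k =>
    div_nonneg (sq_nonneg _) (mul_nonneg (hpq k).1.le (by linarith [(hpq k).2]))
  have hnn : 0 ≤ ∑ k : BNIdx d Par,
      Real.sqrt (prCfg Par (bnDist Par p) k * prCfg Par (bnDist Par q) k) * c k :=
    Finset.sum_nonneg fun k _ => mul_nonneg (Real.sqrt_nonneg _) (hc0 k)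
  have htel := Finset.sum_range_sub' (fun n => ∑ x, GW r n x) d
  have h0 : ∑ x, GW r 0 x = 1 := by simp [GW]
  have hd' : ∑ x, GW r d x = ∑ x, Real.sqrt (bnDist Par p x * bnDist Par q x) := by
    refine Finset.sum_congr rfl fun x _ => ?_
    rw [hr, GW_sqrt _ _ (fW_nonneg Par p hp) (fW_nonneg Par q hq), GW_full, GW_full]
  rw [Finset.sum_range] at htel
  have hsum := Finset.sum_le_sum fun (n : Fin d) (_ : n ∈ Finset.univ) => hstep n
  rw [htel, h0, hd'] at hsum
  have hS : ∑ k : BNIdx d Par,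
      Real.sqrt (prCfg Par (bnDist Par p) k * prCfg Par (bnDist Par q) k) * c k =
      ∑ n, ∑ a, Real.sqrt (prCfg Par (bnDist Par p) ⟨n, a⟩ * prCfg Par (bnDist Par q) ⟨n, a⟩) *
        c ⟨n, a⟩ := Fintype.sum_sigma _
  rw [← hS] at hsum
  unfold hellingerSq
  change _ ≤ 2 * ∑ k : BNIdx d Par,
      Real.sqrt (prCfg Par (bnDist Par p) k * prCfg Par (bnDist Par q) k) * c k
  linarith
end

section
/- For every q ∈ ℝ^S, every j ∈ {1,…,d}, and every x, y ∈ {0,1}^d: (a) if x_i = y_i for all i ≤ j, then F(x,q)_{i,a} = F(y,q)_{i,a} for all (i,a) ∈ S with i ≤ j; and (b) conversely, if F(x,q)_{i,a} = F(y,q)_{i,a} for all (i,a) ∈ S with i ≤ j, then x_i = y_i for all i ≤ j. -/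
open scoped BigOperators Classical

theorem Fvec_determines_and_is_determined_by_prefix
    (d : ℕ) (hd : 1 ≤ d) (Par : Fin d → Finset (Fin d))
    (hpar : ∀ i : Fin d, ∀ j ∈ Par i, j < i)
    (q : BNIdx d Par → ℝ) (j : Fin d) (x y : Fin d → Bool) :
    ((∀ i : Fin d, i ≤ j → x i = y i) →
        ∀ k : BNIdx d Par, k.1 ≤ j → Fvec Par x q k = Fvec Par y q k) ∧
    ((∀ k : BNIdx d Par, k.1 ≤ j → Fvec Par x q k = Fvec Par y q k) →
        ∀ i : Fin d, i ≤ j → x i = y i) := by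
  have key : ∀ i : Fin d, (∀ l : Fin d, l < i → x l = y l) →
      cfgOf Par x i = cfgOf Par y i := by
    intro i h
    funext l
    exact h l.1 (hpar i l.1 l.2)
  constructor
  · intro h k hk
    have h1 := key k.1 (fun l hl => h l (hl.le.trans hk))
    unfold Fvec
    rw [h1, h k.1 hk]
  · intro h i
    induction i using WellFoundedLT.induction with
    | ind i ih =>
      intro hi
      have h1 := key i (fun l hl => ih l hl (hl.le.trans hi))
      have h2 := h ⟨i, cfgOf Par y i⟩ hi
      unfold Fvec at h2
      simp only [h1, if_true] at h2
      cases hx : x i <;> cases hy : y i <;> simp [hx, hy] at h2 ⊢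
end

section
/- Let p ∈ [0,1]^S and P = P_p. Then E_{X∼P}[F(X,p)] = p, and the covariance matrix of F(X,p) is diagonal: for all k ≠ l in {1,…,m}, E_{X∼P}[(F(X,p)_k − p_k)(F(X,p)_l − p_l)] = 0, and for each k, E_{X∼P}[(F(X,p)_k − p_k)²] = Pr_P[Π_k]·p_k·(1 − p_k). -/
open scoped BigOperators Classical

noncomputable def bnFac {d : ℕ} (Par : Fin d → Finset (Fin d))
    (p : BNIdx d Par → ℝ) (x : Fin d → Bool) (i : Fin d) : ℝ :=
  if x i then p ⟨i, cfgOf Par x i⟩ else 1 - p ⟨i, cfgOf Par x i⟩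

noncomputable def bnW {d : ℕ} (Par : Fin d → Finset (Fin d))
    (p : BNIdx d Par → ℝ) (n : ℕ) (x : Fin d → Bool) : ℝ :=
  ∏ i : Fin d, if i.val < n then bnFac Par p x i else 1 / 2

def bnDep {d : ℕ} (n : ℕ) (f : (Fin d → Bool) → ℝ) : Prop :=
  ∀ x y : Fin d → Bool, (∀ j : Fin d, j.val < n → x j = y j) → f x = f y

noncomputable def bnC {d : ℕ} (Par : Fin d → Finset (Fin d))
    (p : BNIdx d Par → ℝ) (i : Fin d) (f : (Fin d → Bool) → ℝ) (x : Fin d → Bool) : ℝ :=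
  p ⟨i, cfgOf Par x i⟩ * f (Function.update x i true)
    + (1 - p ⟨i, cfgOf Par x i⟩) * f (Function.update x i false)

theorem bn_sym {d : ℕ} (i : Fin d) (f : (Fin d → Bool) → ℝ) :
    ∑ x, f x = ∑ x, (f (Function.update x i true) + f (Function.update x i false)) / 2 := by
  have hinv : Function.Involutive
      (fun x : Fin d → Bool => Function.update x i (!x i)) := by
    intro x
    simp
  have h := Equiv.sum_comp (Function.Involutive.toPerm _ hinv) f
  have h2 : ∀ x : Fin d → Bool,
      f (Function.update x i true) + f (Function.update x i false)
        = f x + f (Function.Involutive.toPerm _ hinv x) := by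
    intro x
    have e : Function.update x i (x i) = x := Function.update_eq_self i x
    show _ = f x + f (Function.update x i (!x i))
    cases hx : x i <;> rw [hx] at e <;> simp [e, add_comm]
  simp only [h2]
  rw [← Finset.sum_div, Finset.sum_add_distrib, h]
  ring

theorem bn_cfg_congr {d : ℕ} (Par : Fin d → Finset (Fin d))
    (hpar : ∀ i : Fin d, ∀ j ∈ Par i, j < i) (i : Fin d) (x y : Fin d → Bool)
    (h : ∀ j : Fin d, j.val < i.val → x j = y j) : cfgOf Par x i = cfgOf Par y i := by
  funext j
  exact h _ (hpar i _ j.2)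

theorem bn_cfg_update {d : ℕ} (Par : Fin d → Finset (Fin d))
    (hpar : ∀ i : Fin d, ∀ j ∈ Par i, j < i) (i k : Fin d) (hk : k ≤ i) (x : Fin d → Bool)
    (b : Bool) : cfgOf Par (Function.update x i b) k = cfgOf Par x k := by
  apply bn_cfg_congr Par hpar
  intro j hj
  apply Function.update_of_ne
  intro h
  subst h
  exact absurd (Fin.le_def.1 hk) (by omega)

theorem bn_step {d : ℕ} (Par : Fin d → Finset (Fin d))
    (hpar : ∀ i : Fin d, ∀ j ∈ Par i, j < i)
    (p : BNIdx d Par → ℝ) (i : Fin d) (f : (Fin d → Bool) → ℝ) :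
    ∑ x, bnW Par p (i.val + 1) x * f x = ∑ x, bnW Par p i.val x * bnC Par p i f x := by
  let A : (Fin d → Bool) → ℝ := fun x =>
    ∏ j ∈ Finset.univ.erase i, if j.val < i.val then bnFac Par p x j else 1 / 2
  have hA : ∀ x b, A (Function.update x i b) = A x := by
    intro x b
    apply Finset.prod_congr rfl
    intro j hj
    have hji : j ≠ i := (Finset.mem_erase.1 hj).1
    split_ifs with h
    · unfold bnFac
      rw [bn_cfg_update Par hpar i j (Fin.le_def.2 h.le), Function.update_of_ne hji]
    · rfl
  have h1 : ∀ x, bnW Par p (i.val + 1) x = bnFac Par p x i * A x := by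
    intro x
    unfold bnW
    rw [← Finset.mul_prod_erase _ _ (Finset.mem_univ i)]
    congr 1
    · simp
    · apply Finset.prod_congr rfl
      intro j hj
      have hji : j ≠ i := (Finset.mem_erase.1 hj).1
      have : j.val ≠ i.val := fun h => hji (Fin.ext h)
      have e : (j.val < i.val + 1) ↔ (j.val < i.val) := by omega
      simp only [e]
  have h0 : ∀ x, bnW Par p i.val x = 1 / 2 * A x := by
    intro x
    unfold bnW
    rw [← Finset.mul_prod_erase _ _ (Finset.mem_univ i)]
    congr 1
    simp
  rw [bn_sym i]
  apply Finset.sum_congr rfl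
  intro x _
  rw [h1, h1, h0, hA, hA]
  unfold bnFac bnC
  rw [bn_cfg_update Par hpar i i le_rfl, bn_cfg_update Par hpar i i le_rfl]
  simp
  ring

theorem bn_trunc {d : ℕ} (Par : Fin d → Finset (Fin d))
    (hpar : ∀ i : Fin d, ∀ j ∈ Par i, j < i)
    (p : BNIdx d Par → ℝ) (n : ℕ) (hn : n ≤ d) (f : (Fin d → Bool) → ℝ) (hf : bnDep n f) :
    expec (bnDist Par p) f = ∑ x, bnW Par p n x * f x := by
  have key : ∀ m, n ≤ m → m ≤ d →
      ∑ x, bnW Par p m x * f x = ∑ x, bnW Par p n x * f x := by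
    intro m hm
    induction m, hm using Nat.le_induction with
    | base => intro _; rfl
    | succ m hm ih =>
      intro hmd
      rw [← ih (by omega), bn_step Par hpar p ⟨m, by omega⟩ f]
      apply Finset.sum_congr rfl
      intro x _
      have hu : ∀ b, f (Function.update x ⟨m, by omega⟩ b) = f x := by
        intro b
        apply hf
        intro j hj
        apply Function.update_of_ne
        intro h
        subst h
        simp at hj
        omega
      unfold bnC
      rw [hu, hu]
      ring
  rw [← key d hn le_rfl]
  unfold expec
  apply Finset.sum_congr rfl
  intro x _
  congr 1
  unfold bnW bnDist
  apply Finset.prod_congr rfl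
  intro i _
  simp [bnFac]

theorem bn_cond {d : ℕ} (Par : Fin d → Finset (Fin d))
    (hpar : ∀ i : Fin d, ∀ j ∈ Par i, j < i)
    (p : BNIdx d Par → ℝ) (i : Fin d) (f : (Fin d → Bool) → ℝ) (hf : bnDep (i.val + 1) f) :
    expec (bnDist Par p) f = expec (bnDist Par p) (bnC Par p i f) := by
  have hC : bnDep i.val (bnC Par p i f) := by
    intro x y h
    have hu : ∀ b, f (Function.update x i b) = f (Function.update y i b) := by
      intro b
      apply hf
      intro j hj
      by_cases hji : j = i
      · subst hji; simp
      · rw [Function.update_of_ne hji, Function.update_of_ne hji]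
        apply h
        have : j.val ≠ i.val := fun h => hji (Fin.ext h)
        omega
    unfold bnC
    rw [hu, hu, bn_cfg_congr Par hpar i x y h]
  rw [bn_trunc Par hpar p _ i.2 f hf, bn_trunc Par hpar p _ i.2.le _ hC, bn_step Par hpar]

theorem bn_total {d : ℕ} (Par : Fin d → Finset (Fin d))
    (hpar : ∀ i : Fin d, ∀ j ∈ Par i, j < i)
    (p : BNIdx d Par → ℝ) (c : ℝ) : expec (bnDist Par p) (fun _ => c) = c := by
  rw [bn_trunc Par hpar p 0 (Nat.zero_le _) _ (fun _ _ _ => rfl)]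
  simp [bnW]

theorem bn_F_dep {d : ℕ} (Par : Fin d → Finset (Fin d))
    (hpar : ∀ i : Fin d, ∀ j ∈ Par i, j < i)
    (p : BNIdx d Par → ℝ) (k : BNIdx d Par) (n : ℕ) (hn : k.1.val < n) :
    bnDep n (fun x => Fvec Par x p k) := by
  intro x y h
  simp only [Fvec]
  rw [bn_cfg_congr Par hpar k.1 x y (fun j hj => h j (by omega)), h k.1 hn]

theorem bn_F_update {d : ℕ} (Par : Fin d → Finset (Fin d))
    (hpar : ∀ i : Fin d, ∀ j ∈ Par i, j < i)
    (p : BNIdx d Par → ℝ) (k : BNIdx d Par) (x : Fin d → Bool) (b : Bool) :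
    Fvec Par (Function.update x k.1 b) p k - p k
      = if cfgOf Par x k.1 = k.2 then (if b then 1 else 0) - p k else 0 := by
  unfold Fvec
  rw [bn_cfg_update Par hpar k.1 k.1 le_rfl]
  split_ifs <;> simp_all

theorem bn_p_eq {d : ℕ} (Par : Fin d → Finset (Fin d))
    (p : BNIdx d Par → ℝ) (k : BNIdx d Par) (x : Fin d → Bool)
    (h : cfgOf Par x k.1 = k.2) : p ⟨k.1, cfgOf Par x k.1⟩ = p k := by
  rw [h]

theorem bn_cov_lt {d : ℕ} (Par : Fin d → Finset (Fin d))
    (hpar : ∀ i : Fin d, ∀ j ∈ Par i, j < i)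
    (p : BNIdx d Par → ℝ) (k l : BNIdx d Par) (hkl : k.1 < l.1) :
    expec (bnDist Par p) (fun x => (Fvec Par x p k - p k) * (Fvec Par x p l - p l)) = 0 := by
  rw [bn_cond Par hpar p l.1]
  · rw [← bn_total Par hpar p 0]
    congr 1
    funext x
    have hF : ∀ b, Fvec Par (Function.update x l.1 b) p k = Fvec Par x p k := by
      intro b
      unfold Fvec
      rw [bn_cfg_update Par hpar l.1 k.1 hkl.le, Function.update_of_ne hkl.ne]
    unfold bnC
    simp only [bn_F_update Par hpar, hF]
    by_cases h : cfgOf Par x l.1 = l.2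
    · rw [bn_p_eq Par p l x h]
      simp [h]
      ring
    · simp [h]
  · intro x y h
    have h1 := bn_F_dep Par hpar p k (l.1.val + 1) (Nat.lt_succ_of_lt hkl) x y h
    have h2 := bn_F_dep Par hpar p l (l.1.val + 1) (Nat.lt_succ_self _) x y h
    simp only at h1 h2 ⊢
    rw [h1, h2]

theorem Fvec_mean_and_diagonal_covariance
    (d : ℕ) (hd : 1 ≤ d) (Par : Fin d → Finset (Fin d))
    (hpar : ∀ i : Fin d, ∀ j ∈ Par i, j < i)
    (p : BNIdx d Par → ℝ) (hp : ∀ k, p k ∈ Set.Icc (0:ℝ) 1) :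
    (∀ k : BNIdx d Par, expec (bnDist Par p) (fun x => Fvec Par x p k) = p k) ∧
    (∀ k l : BNIdx d Par, k ≠ l →
      expec (bnDist Par p)
        (fun x => (Fvec Par x p k - p k) * (Fvec Par x p l - p l)) = 0) ∧
    (∀ k : BNIdx d Par,
      expec (bnDist Par p) (fun x => (Fvec Par x p k - p k) ^ 2)
        = prCfg Par (bnDist Par p) k * p k * (1 - p k)) := by
  refine ⟨?_, ?_, ?_⟩
  · intro k
    rw [bn_cond Par hpar p k.1 _ (bn_F_dep Par hpar p k _ (Nat.lt_succ_self _))]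
    conv_rhs => rw [← bn_total Par hpar p (p k)]
    congr 1
    funext x
    have ht := bn_F_update Par hpar p k x true
    have hf := bn_F_update Par hpar p k x false
    unfold bnC
    beta_reduce
    rw [sub_eq_iff_eq_add.1 ht, sub_eq_iff_eq_add.1 hf]
    by_cases h : cfgOf Par x k.1 = k.2
    · rw [bn_p_eq Par p k x h]
      simp [h]
    · simp [h]
      ring
  · intro k l hkl
    rcases lt_trichotomy k.1 l.1 with h | h | h
    · exact bn_cov_lt Par hpar p k l h
    · rw [← bn_total Par hpar p 0]
      congr 1
      funext x
      obtain ⟨i, a⟩ := k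
      obtain ⟨j, b⟩ := l
      simp only at h
      subst h
      have hab : a ≠ b := fun e => hkl (by rw [e])
      unfold Fvec
      by_cases ha : cfgOf Par x i = a
      · have hb : cfgOf Par x i ≠ b := fun e => hab (ha.symm.trans e)
        simp [hb]
      · simp [ha]
    · rw [← bn_cov_lt Par hpar p l k h]
      congr 1
      funext x
      ring
  · intro k
    rw [bn_cond Par hpar p k.1]
    · unfold prCfg expec
      rw [Finset.sum_mul, Finset.sum_mul]
      apply Finset.sum_congr rfl
      intro x _
      unfold bnC
      simp only [bn_F_update Par hpar]
      by_cases h : cfgOf Par x k.1 = k.2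
      · rw [bn_p_eq Par p k x h]
        simp [h]
        ring
      · simp [h]
    · intro x y h
      have h2 := bn_F_dep Par hpar p k (k.1.val + 1) (Nat.lt_succ_self _) x y h
      simp only at h2 ⊢
      rw [h2]
end

section
/- Let p, q ∈ [0,1]^S, let P = P_p, let v ∈ ℝ^S be a unit vector (‖v‖₂ = 1), and let T ≥ 0. Then Pr_{X∼P}[ |v·(F(X,q) − q)| ≥ T + ‖p − q‖₂ ] ≤ 2·exp(−T²/2). -/
open scoped BigOperators Classical

lemma bn_sum_prod_le : ∀ (d : ℕ) (g : Fin d → (Fin d → Bool) → ℝ) (c : Fin d → ℝ),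
    (∀ i x, 0 ≤ g i x) →
    (∀ i x y, (∀ j, j ≤ i → x j = y j) → g i x = g i y) →
    (∀ i x, g i (Function.update x i true) + g i (Function.update x i false) ≤ c i) →
    ∑ x : Fin d → Bool, ∏ i, g i x ≤ ∏ i, c i := by
  intro d
  induction d with
  | zero => intro g c _ _ _; simp
  | succ n ih =>
    intro g c h0 hdep hc
    have hcn : ∀ i, 0 ≤ c i := fun i =>
      le_trans (add_nonneg (h0 i _) (h0 i _)) (hc i (fun _ => true))
    have e := (Fin.snocEquiv (fun _ : Fin (n+1) => Bool)).sum_comp (fun x => ∏ i, g i x)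
    rw [← e, Fintype.sum_prod_type_right]
    have key : ∀ (x : Fin n → Bool) (b : Bool) (i : Fin n),
        g i.castSucc (Fin.snoc (α := fun _ => Bool) x b)
          = g i.castSucc (Fin.snoc (α := fun _ => Bool) x true) := by
      intro x b i
      apply hdep
      intro j hj
      have hj' : j ≠ Fin.last n := by
        rintro rfl
        exact absurd hj (not_le.mpr (Fin.castSucc_lt_last i))
      obtain ⟨k, rfl⟩ := Fin.exists_castSucc_eq.mpr hj'
      simp
    have hprod : ∀ x : Fin n → Bool, 0 ≤ ∏ i : Fin n, g i.castSucc
        (Fin.snoc (α := fun _ => Bool) x true) := fun x => Finset.prod_nonneg fun i _ => h0 _ _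
    have step : ∀ x : Fin n → Bool,
        ∑ b : Bool, ∏ i, g i (Fin.snocEquiv (fun _ : Fin (n+1) => Bool) (b, x))
          ≤ (∏ i : Fin n, g i.castSucc (Fin.snoc (α := fun _ => Bool) x true))
            * c (Fin.last n) := by
      intro x
      have h1 := hc (Fin.last n) (Fin.snoc (α := fun _ => Bool) x true)
      rw [Fin.update_snoc_last, Fin.update_snoc_last] at h1
      have h2 := mul_le_mul_of_nonneg_left h1 (hprod x)
      refine le_trans (le_of_eq ?_) h2
      simp only [Fintype.sum_bool, Fin.prod_univ_castSucc]
      rw [mul_add]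
      congr 2
      exact Finset.prod_congr rfl fun i _ => key x false i
    refine (Finset.sum_le_sum fun x _ => step x).trans ?_
    rw [← Finset.sum_mul, Fin.prod_univ_castSucc]
    refine mul_le_mul_of_nonneg_right ?_ (hcn _)
    refine ih (fun i x => g i.castSucc (Fin.snoc (α := fun _ => Bool) x true))
      (fun i => c i.castSucc) (fun i x => h0 _ _) ?_ ?_
    · intro i x y hxy
      apply hdep
      intro j hj
      have hj' : j ≠ Fin.last n := by
        rintro rfl
        exact absurd hj (not_le.mpr (Fin.castSucc_lt_last i))
      obtain ⟨k, rfl⟩ := Fin.exists_castSucc_eq.mpr hj'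
      simpa using hxy k (by simpa using hj)
    · intro i x
      have := hc i.castSucc (Fin.snoc (α := fun _ => Bool) x true)
      simpa only [Fin.snoc_update] using this

lemma bn_exp_le (t y : ℝ) (h1 : -1 ≤ y) (h2 : y ≤ 1) :
    Real.exp (t * y) ≤ Real.cosh t + y * Real.sinh t := by
  have := convexOn_exp.2 (Set.mem_univ t) (Set.mem_univ (-t))
    (by linarith : 0 ≤ (1 + y) / 2) (by linarith : 0 ≤ (1 - y) / 2) (by ring)
  simp only [smul_eq_mul] at this
  rw [Real.cosh_eq, Real.sinh_eq]
  calc Real.exp (t * y) = Real.exp ((1 + y) / 2 * t + (1 - y) / 2 * -t) := by congr 1; ring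
    _ ≤ _ := this
    _ = _ := by ring

lemma bn_hoeff (t p : ℝ) (h0 : 0 ≤ p) (h1 : p ≤ 1) :
    p * Real.exp (t * (1 - p)) + (1 - p) * Real.exp (t * (0 - p)) ≤ Real.exp (t ^ 2 / 2) := by
  have a := mul_le_mul_of_nonneg_left (bn_exp_le t (1 - p) (by linarith) (by linarith)) h0
  have b := mul_le_mul_of_nonneg_left (bn_exp_le t (0 - p) (by linarith) (by linarith))
    (sub_nonneg.mpr h1)
  have c := Real.cosh_le_exp_half_sq t
  nlinarith

lemma bn_mgf {d : ℕ} (Par : Fin d → Finset (Fin d))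
    (hpar : ∀ i : Fin d, ∀ j ∈ Par i, j < i)
    (p : BNIdx d Par → ℝ) (hp : ∀ k, p k ∈ Set.Icc (0:ℝ) 1)
    (v : BNIdx d Par → ℝ) (hv : ∑ k, v k ^ 2 = 1) (T : ℝ) :
    ∑ x : Fin d → Bool, bnDist Par p x * Real.exp (T * ∑ i : Fin d,
      v ⟨i, cfgOf Par x i⟩ * ((if x i then 1 else 0) - p ⟨i, cfgOf Par x i⟩))
      ≤ Real.exp (T ^ 2 / 2) := by
  have main := bn_sum_prod_le d
    (fun i x => (if x i then p ⟨i, cfgOf Par x i⟩ else 1 - p ⟨i, cfgOf Par x i⟩) *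
      Real.exp (T * (v ⟨i, cfgOf Par x i⟩ * ((if x i then 1 else 0) - p ⟨i, cfgOf Par x i⟩))))
    (fun i => Real.exp (T ^ 2 / 2 * ∑ a, v ⟨i, a⟩ ^ 2)) ?_ ?_ ?_
  · rw [← Real.exp_sum, ← Finset.mul_sum, ← Fintype.sum_sigma', hv, mul_one] at main
    refine le_trans (le_of_eq ?_) main
    refine Finset.sum_congr rfl fun x _ => ?_
    rw [Finset.prod_mul_distrib, ← Real.exp_sum, ← Finset.mul_sum]
    rfl
  · intro i x
    refine mul_nonneg ?_ (Real.exp_pos _).le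
    have := hp ⟨i, cfgOf Par x i⟩
    split_ifs
    · exact this.1
    · linarith [this.2]
  · intro i x y hxy
    have h1 : cfgOf Par x i = cfgOf Par y i := by
      funext j
      exact hxy _ (hpar i _ j.2).le
    simp only [h1, hxy i le_rfl]
  · intro i x
    have hu : ∀ b, cfgOf Par (Function.update x i b) i = cfgOf Par x i := by
      intro b
      funext j
      exact Function.update_of_ne (hpar i _ j.2).ne _ _
    simp only [hu, Function.update_self, if_true, Bool.false_eq_true, if_false]
    have h := bn_hoeff (T * v ⟨i, cfgOf Par x i⟩) _ (hp ⟨i, cfgOf Par x i⟩).1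
      (hp ⟨i, cfgOf Par x i⟩).2
    simp only [← mul_assoc]
    refine h.trans (Real.exp_le_exp.mpr ?_)
    have h3 : v ⟨i, cfgOf Par x i⟩ ^ 2 ≤ ∑ a, v ⟨i, a⟩ ^ 2 :=
      Finset.single_le_sum (f := fun a => v ⟨i, a⟩ ^ 2) (fun a _ => sq_nonneg _)
        (Finset.mem_univ (cfgOf Par x i))
    have := mul_le_mul_of_nonneg_left h3 (by positivity : 0 ≤ T ^ 2 / 2)
    linarith [this, mul_pow T (v ⟨i, cfgOf Par x i⟩) 2]

lemma bn_dot {d : ℕ} (Par : Fin d → Finset (Fin d)) (x : Fin d → Bool)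
    (q v : BNIdx d Par → ℝ) :
    ∑ k : BNIdx d Par, v k * (Fvec Par x q k - q k) =
      ∑ i : Fin d, v ⟨i, cfgOf Par x i⟩ * ((if x i then 1 else 0) - q ⟨i, cfgOf Par x i⟩) := by
  rw [Fintype.sum_sigma]
  refine Finset.sum_congr rfl fun i _ => ?_
  rw [Finset.sum_eq_single (cfgOf Par x i)]
  · simp [Fvec]
  · intro a _ ha
    simp [Fvec, ha.symm]
  · simp

lemma bn_bias {d : ℕ} (Par : Fin d → Finset (Fin d)) (x : Fin d → Bool)
    (r v : BNIdx d Par → ℝ) (hv : ∑ k, v k ^ 2 = 1) :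
    |∑ i : Fin d, v ⟨i, cfgOf Par x i⟩ * r ⟨i, cfgOf Par x i⟩| ≤ enorm2 r := by
  have hle : ∀ w : BNIdx d Par → ℝ, ∑ i : Fin d, w ⟨i, cfgOf Par x i⟩ ^ 2 ≤ ∑ k, w k ^ 2 := by
    intro w
    rw [Fintype.sum_sigma]
    refine Finset.sum_le_sum fun i _ => ?_
    exact Finset.single_le_sum (f := fun a => w ⟨i, a⟩ ^ 2) (fun a _ => sq_nonneg _)
        (Finset.mem_univ (cfgOf Par x i))
  apply Real.abs_le_sqrt
  refine (Finset.sum_mul_sq_le_sq_mul_sq _ _ _).trans ?_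
  have h1 := hle v
  rw [hv] at h1
  have h3 : 0 ≤ ∑ k, r k ^ 2 := Finset.sum_nonneg fun _ _ => sq_nonneg _
  calc _ ≤ 1 * ∑ k, r k ^ 2 :=
        mul_le_mul h1 (hle r) (Finset.sum_nonneg fun _ _ => sq_nonneg _) zero_le_one
    _ = _ := one_mul _

theorem azuma_concentration_for_Fvec
    (d : ℕ) (hd : 1 ≤ d) (Par : Fin d → Finset (Fin d))
    (hpar : ∀ i : Fin d, ∀ j ∈ Par i, j < i)
    (p q : BNIdx d Par → ℝ)
    (hp : ∀ k, p k ∈ Set.Icc (0:ℝ) 1) (hq : ∀ k, q k ∈ Set.Icc (0:ℝ) 1)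
    (v : BNIdx d Par → ℝ) (hv : enorm2 v = 1) (T : ℝ) (hT : 0 ≤ T) :
    prEvent (bnDist Par p)
        (fun x => T + enorm2 (fun k => p k - q k) ≤
          |∑ k : BNIdx d Par, v k * (Fvec Par x q k - q k)|)
      ≤ 2 * Real.exp (-T ^ 2 / 2) := by
  have hv' : ∑ k, v k ^ 2 = 1 := by
    unfold enorm2 at hv
    exact Real.sqrt_eq_one.mp hv
  have m1 := bn_mgf Par hpar p hp v hv' T
  have m2 := bn_mgf Par hpar p hp v hv' (-T)
  rw [neg_sq] at m2
  have hE : Real.exp (-T ^ 2 / 2) = Real.exp (-T ^ 2) * Real.exp (T ^ 2 / 2) := by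
    rw [← Real.exp_add]; congr 1; ring
  have tot := mul_le_mul_of_nonneg_left (add_le_add m1 m2) (Real.exp_pos (-T ^ 2)).le
  rw [← Finset.sum_add_distrib, Finset.mul_sum] at tot
  refine le_trans ?_ (tot.trans (le_of_eq (by rw [hE]; ring)))
  unfold prEvent
  refine Finset.sum_le_sum fun x _ => ?_
  have hP : 0 ≤ bnDist Par p x := by
    refine Finset.prod_nonneg fun i _ => ?_
    have := hp ⟨i, cfgOf Par x i⟩
    split_ifs
    · exact this.1
    · linarith [this.2]
  set Z := ∑ i : Fin d,
      v ⟨i, cfgOf Par x i⟩ * ((if x i then 1 else 0) - p ⟨i, cfgOf Par x i⟩) with hZ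
  rw [← mul_add, mul_left_comm]
  have hpos : 0 ≤ Real.exp (-T ^ 2) * (Real.exp (T * Z) + Real.exp (-T * Z)) := by positivity
  split_ifs with hA
  · refine le_mul_of_one_le_right hP ?_
    beta_reduce at hA
    rw [bn_dot] at hA
    have hb := bn_bias Par x (fun k => p k - q k) v hv'
    have hsum : ∑ i : Fin d,
        v ⟨i, cfgOf Par x i⟩ * ((if x i then 1 else 0) - q ⟨i, cfgOf Par x i⟩) =
        Z + ∑ i : Fin d, v ⟨i, cfgOf Par x i⟩ *
          (p ⟨i, cfgOf Par x i⟩ - q ⟨i, cfgOf Par x i⟩) := by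
      rw [hZ, ← Finset.sum_add_distrib]
      exact Finset.sum_congr rfl fun i _ => by ring
    rw [hsum] at hA
    have hZT : T ≤ |Z| := by
      have := hA.trans (abs_add_le _ _)
      linarith
    rw [mul_add, ← Real.exp_add, ← Real.exp_add]
    rcases le_abs.mp hZT with h | h
    · have : 1 ≤ Real.exp (-T ^ 2 + T * Z) := Real.one_le_exp (by nlinarith)
      linarith [Real.exp_pos (-T ^ 2 + -T * Z)]
    · have : 1 ≤ Real.exp (-T ^ 2 + -T * Z) := Real.one_le_exp (by nlinarith)
      linarith [Real.exp_pos (-T ^ 2 + T * Z)]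
  · exact mul_nonneg hP hpos
end

section
/- Let P and Q be probability distributions on a finite set D with P ≠ Q. Then there exist probability distributions E and L on D with disjoint supports such that for all x ∈ D: (i) Q(x) = P(x) + d_TV(P,Q)·E(x) − d_TV(P,Q)·L(x), and (ii) d_TV(P,Q)·L(x) ≤ P(x). -/
open scoped BigOperators Classical

theorem exists_disjoint_error_decomposition
    (D : Type*) [Fintype D] (P Q : D → ℝ)
    (hP : IsProbDist P) (hQ : IsProbDist Q) (hPQ : P ≠ Q) :
    ∃ E L : D → ℝ, IsProbDist E ∧ IsProbDist L ∧
      (∀ x, E x = 0 ∨ L x = 0) ∧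
      (∀ x, Q x = P x + dTV P Q * E x - dTV P Q * L x) ∧
      (∀ x, dTV P Q * L x ≤ P x) := by
  obtain ⟨hP0, hP1⟩ := hP
  obtain ⟨hQ0, hQ1⟩ := hQ
  have hpos : 0 < dTV P Q := by
    obtain ⟨x, hx⟩ := Function.ne_iff.mp hPQ
    have h : 0 < ∑ x, |P x - Q x| :=
      Finset.sum_pos' (fun i _ => abs_nonneg _)
        ⟨x, Finset.mem_univ x, abs_pos.mpr (sub_ne_zero.mpr hx)⟩
    unfold dTV
    linarith
  have hS : ∑ x, |P x - Q x| = 2 * dTV P Q := by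
    unfold dTV
    ring
  generalize dTV P Q = t at *
  have ht : t ≠ 0 := hpos.ne'
  refine ⟨fun x => (|P x - Q x| + (Q x - P x)) / 2 / t,
    fun x => (|P x - Q x| + (P x - Q x)) / 2 / t, ⟨?_, ?_⟩, ⟨?_, ?_⟩, ?_, ?_, ?_⟩
  · intro x
    have := le_abs_self (P x - Q x)
    exact div_nonneg (by linarith) hpos.le
  · rw [← Finset.sum_div, ← Finset.sum_div, Finset.sum_add_distrib, Finset.sum_sub_distrib,
      hS, hP1, hQ1]
    field_simp
    ring
  · intro x
    have := neg_le_abs (P x - Q x)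
    exact div_nonneg (by linarith) hpos.le
  · rw [← Finset.sum_div, ← Finset.sum_div, Finset.sum_add_distrib, Finset.sum_sub_distrib,
      hS, hP1, hQ1]
    field_simp
    ring
  · intro x
    rcases le_total 0 (P x - Q x) with h | h
    · left
      simp [abs_of_nonneg h]
    · right
      simp [abs_of_nonpos h]
  · intro x
    simp only [mul_div_cancel₀ _ ht]
    ring
  · intro x
    simp only [mul_div_cancel₀ _ ht]
    have h1 := hP0 x
    have h2 := hQ0 x
    rcases abs_cases (P x - Q x) with h | h <;> linarith
end

section
/- There exist universal constants C > 0 and ε₀ ∈ (0,1) such that the following holds. Let ε ∈ (0, ε₀), let p, q ∈ [0,1]^S with P = P_p, let L be a probability distribution on {0,1}^d, and let w_L, w_P be reals with 0 ≤ w_L ≤ 2ε, 0 < w_P ≤ 2, and w_L·L(x) ≤ w_P·P(x) for all x ∈ {0,1}^d. Then w_L·‖M_L‖₂ ≤ C·(ε·log(1/ε) + ε·‖p − q‖₂²). -/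
open scoped BigOperators Classical

lemma aux_tower : ∀ (d : ℕ) (G : Fin d → (Fin d → Bool) → ℝ),
    (∀ i x, 0 ≤ G i x) →
    (∀ i x y, (∀ j, j ≤ i → x j = y j) → G i x = G i y) →
    (∀ i x, G i (Function.update x i true) + G i (Function.update x i false) ≤ 1) →
    ∑ x : Fin d → Bool, ∏ i, G i x ≤ 1 := by
  intro d
  induction d with
  | zero => intro G _ _ _; simp
  | succ n ih =>
    intro G h0 hdep hs
    rw [← (Fin.consEquiv (fun _ => Bool)).sum_comp, Fintype.sum_prod_type]
    have key : ∀ b : Bool, ∑ y : Fin n → Bool, ∏ i : Fin (n+1),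
        G i (Fin.consEquiv (fun _ => Bool) (b, y)) ≤ G 0 (fun _ => b) := by
      intro b
      have h1 : ∀ y : Fin n → Bool, ∏ i : Fin (n+1), G i (Fin.consEquiv (fun _ => Bool) (b, y))
          = G 0 (fun _ => b) * ∏ i : Fin n, G i.succ (Fin.cons b y : Fin (n+1) → Bool) := by
        intro y
        rw [Fin.prod_univ_succ]
        congr 1
        apply hdep
        intro j hj
        have : j = 0 := Fin.le_zero_iff.mp hj
        subst this
        rfl
      simp_rw [h1]
      rw [← Finset.mul_sum]
      refine mul_le_of_le_one_right (h0 _ _) ?_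
      refine ih (fun i y => G i.succ (Fin.cons b y : Fin (n+1) → Bool)) (fun _ _ => h0 _ _) ?_ ?_
      · intro i x y hxy
        apply hdep
        intro j hj
        induction j using Fin.cases with
        | zero => rfl
        | succ j => simpa using hxy j (Fin.succ_le_succ_iff.mp hj)
      · intro i x
        have := hs i.succ (Fin.cons b x : Fin (n+1) → Bool)
        simpa only [← Fin.cons_update] using this
    have h2 : ∀ b : Bool, G 0 (Function.update (fun _ => true) 0 b) = G 0 (fun _ => b) := by
      intro b
      apply hdep
      intro j hj
      have : j = 0 := Fin.le_zero_iff.mp hj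
      subst this
      simp
    have h3 := hs 0 (fun _ => true)
    rw [h2, h2] at h3
    rw [Fintype.sum_bool]
    linarith [key true, key false]

lemma aux_hoeff (p t : ℝ) (h0 : 0 ≤ p) (h1 : p ≤ 1) :
    p * Real.exp (t * (1 - p)) + (1 - p) * Real.exp (t * (0 - p)) ≤ Real.exp (t ^ 2 / 2) := by
  set A := p * Real.exp (t * (1 - p)) + (1 - p) * Real.exp (t * (0 - p)) with hA
  set B := p * Real.exp (-(t * (1 - p))) + (1 - p) * Real.exp (-(t * (0 - p))) with hB
  have hq : 0 ≤ 1 - p := by linarith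
  have hB1 : 1 ≤ B := by
    have e1 := mul_le_mul_of_nonneg_left (Real.add_one_le_exp (-(t * (1 - p)))) h0
    have e2 := mul_le_mul_of_nonneg_left (Real.add_one_le_exp (-(t * (0 - p)))) hq
    nlinarith
  have hA0 : 0 ≤ A := by positivity
  have hAB : A * B = p ^ 2 + (1 - p) ^ 2 + 2 * (p * (1 - p)) * Real.cosh t := by
    have e1 : Real.exp (t * (1 - p)) * Real.exp (-(t * (1 - p))) = 1 := by
      rw [← Real.exp_add]; simp
    have e2 : Real.exp (t * (0 - p)) * Real.exp (-(t * (0 - p))) = 1 := by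
      rw [← Real.exp_add]; simp
    have e3 : Real.exp (t * (1 - p)) * Real.exp (-(t * (0 - p))) = Real.exp t := by
      rw [← Real.exp_add]; ring_nf
    have e4 : Real.exp (t * (0 - p)) * Real.exp (-(t * (1 - p))) = Real.exp (-t) := by
      rw [← Real.exp_add]; ring_nf
    rw [Real.cosh_eq, hA, hB]
    linear_combination p ^ 2 * e1 + (1 - p) ^ 2 * e2 + p * (1 - p) * e3 + p * (1 - p) * e4
  have hc := Real.one_le_cosh t
  have hc2 := Real.cosh_le_exp_half_sq t
  nlinarith [mul_le_mul_of_nonneg_left hB1 hA0, mul_nonneg (mul_nonneg h0 hq) (sub_nonneg.2 hc),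
    sq_nonneg p, sq_nonneg (1 - p)]

lemma aux_sum_F {d : ℕ} (Par : Fin d → Finset (Fin d)) (p v : BNIdx d Par → ℝ)
    (x : Fin d → Bool) :
    ∑ k, v k * (Fvec Par x p k - p k) =
      ∑ i : Fin d, v ⟨i, cfgOf Par x i⟩ * ((if x i then 1 else 0) - p ⟨i, cfgOf Par x i⟩) := by
  rw [Fintype.sum_sigma]
  refine Finset.sum_congr rfl fun i _ => ?_
  rw [Finset.sum_eq_single (cfgOf Par x i)]
  · simp [Fvec]
  · intro b _ hb
    simp [Fvec, Ne.symm hb]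
  · simp

lemma aux_bn_nonneg {d : ℕ} (Par : Fin d → Finset (Fin d)) (p : BNIdx d Par → ℝ)
    (hp : ∀ k, p k ∈ Set.Icc (0:ℝ) 1) (x : Fin d → Bool) : 0 ≤ bnDist Par p x := by
  unfold bnDist
  refine Finset.prod_nonneg fun i _ => ?_
  have := hp ⟨i, cfgOf Par x i⟩
  split_ifs
  · exact this.1
  · linarith [this.2]

lemma aux_mgf {d : ℕ} (Par : Fin d → Finset (Fin d))
    (hPar : ∀ i : Fin d, ∀ j ∈ Par i, j < i)
    (p v : BNIdx d Par → ℝ) (hp : ∀ k, p k ∈ Set.Icc (0:ℝ) 1) :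
    ∑ x, bnDist Par p x * Real.exp (∑ k, v k * (Fvec Par x p k - p k)) ≤
      Real.exp ((∑ k, v k ^ 2) / 2) := by
  let H : (k : BNIdx d Par) → Bool → ℝ := fun k b =>
    (if b then p k else 1 - p k) *
      Real.exp (v k * ((if b then 1 else 0) - p k) - v k ^ 2 / 2)
  have hT := aux_tower d (fun i x => H ⟨i, cfgOf Par x i⟩ (x i)) ?_ ?_ ?_
  · have hpt : ∀ x, bnDist Par p x * Real.exp (∑ k, v k * (Fvec Par x p k - p k)) ≤
        Real.exp ((∑ k, v k ^ 2) / 2) * ∏ i, H ⟨i, cfgOf Par x i⟩ (x i) := by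
      intro x
      have hle : ∑ i : Fin d, v ⟨i, cfgOf Par x i⟩ ^ 2 ≤ ∑ k, v k ^ 2 := by
        rw [Fintype.sum_sigma]
        refine Finset.sum_le_sum fun i _ => ?_
        exact Finset.single_le_sum (f := fun a => v ⟨i, a⟩ ^ 2) (fun _ _ => sq_nonneg _)
          (Finset.mem_univ (cfgOf Par x i))
      simp only [H]
      rw [Finset.prod_mul_distrib, ← Real.exp_sum, Finset.sum_sub_distrib, ← aux_sum_F,
        ← Finset.sum_div]
      change bnDist Par p x * _ ≤ _ * (bnDist Par p x * _)
      rw [mul_left_comm, ← Real.exp_add]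
      refine mul_le_mul_of_nonneg_left (Real.exp_le_exp.2 ?_) (aux_bn_nonneg Par p hp x)
      linarith
    calc _ ≤ ∑ x, Real.exp ((∑ k, v k ^ 2) / 2) * ∏ i, H ⟨i, cfgOf Par x i⟩ (x i) :=
          Finset.sum_le_sum fun x _ => hpt x
      _ ≤ _ := by
          rw [← Finset.mul_sum]
          exact mul_le_of_le_one_right (Real.exp_pos _).le hT
  · intro i x
    have := hp ⟨i, cfgOf Par x i⟩
    refine mul_nonneg ?_ (Real.exp_pos _).le
    split_ifs
    · exact this.1
    · linarith [this.2]
  · intro i x y hxy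
    have : cfgOf Par x i = cfgOf Par y i := by
      funext j
      exact hxy _ (hPar i _ j.2).le
    simp only [this, hxy i le_rfl]
  · intro i x
    have hc : ∀ b, cfgOf Par (Function.update x i b) i = cfgOf Par x i := by
      intro b
      funext j
      simp only [cfgOf]
      rw [Function.update_of_ne (hPar i _ j.2).ne]
    simp only [hc, Function.update_self, H]
    set k : BNIdx d Par := ⟨i, cfgOf Par x i⟩
    have := aux_hoeff (p k) (v k) (hp k).1 (hp k).2
    simp only [if_true, Bool.false_eq_true, if_false, Real.exp_sub _ (v k ^ 2 / 2)]
    rw [← mul_div_assoc, ← mul_div_assoc, ← add_div, div_le_one (Real.exp_pos _)]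
    exact this

lemma aux_spec {d : ℕ} (Par : Fin d → Finset (Fin d)) (R : (Fin d → Bool) → ℝ)
    (q : BNIdx d Par → ℝ) (hR : ∀ x, 0 ≤ R x) (w K : ℝ) (hw : 0 ≤ w) (hK : 0 ≤ K)
    (h : ∀ v : BNIdx d Par → ℝ, ∑ k, v k ^ 2 = 1 →
      ∑ x, w * R x * (∑ k, v k * (Fvec Par x q k - q k)) ^ 2 ≤ K) :
    w * specNorm (covM Par R q) ≤ K := by
  have e : w * specNorm (covM Par R q) = ‖w • Matrix.toEuclideanCLM (𝕜 := ℝ) (covM Par R q)‖ := by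
    rw [norm_smul, Real.norm_of_nonneg hw]; rfl
  rw [e]
  refine ContinuousLinearMap.opNorm_le_of_re_inner_le hK ?_
  intro u v hu hv
  have hu' : ∑ k, u k ^ 2 = 1 := by rw [← EuclideanSpace.real_norm_sq_eq, hu]; norm_num
  have hv' : ∑ k, v k ^ 2 = 1 := by rw [← EuclideanSpace.real_norm_sq_eq, hv]; norm_num
  have h1 := h u hu'
  have h2 := h v hv'
  have e2 : inner ℝ ((w • Matrix.toEuclideanCLM (𝕜 := ℝ) (covM Par R q)) u) v =
      ∑ x, w * R x * ((∑ k, u k * (Fvec Par x q k - q k)) *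
        (∑ k, v k * (Fvec Par x q k - q k))) := by
    rw [real_inner_comm, _root_.smul_apply, inner_smul_right,
      Matrix.inner_toEuclideanCLM]
    simp only [dotProduct, Matrix.mulVec, covM, expec, Finset.mul_sum, Finset.sum_mul]
    rw [Finset.sum_comm]
    conv_rhs => rw [Finset.sum_comm]; enter [2, k]; rw [Finset.sum_comm]
    rw [Finset.sum_comm]
    refine Finset.sum_congr rfl fun k _ => Finset.sum_congr rfl fun l _ =>
      Finset.sum_congr rfl fun x _ => ?_
    ring
  simp only [e2, RCLike.re_to_real]
  have h3 : ∑ x, w * R x * ((∑ k, u k * (Fvec Par x q k - q k)) *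
        (∑ k, v k * (Fvec Par x q k - q k))) ≤
      (∑ x, w * R x * (∑ k, u k * (Fvec Par x q k - q k)) ^ 2 +
       ∑ x, w * R x * (∑ k, v k * (Fvec Par x q k - q k)) ^ 2) / 2 := by
    rw [← Finset.sum_add_distrib, Finset.sum_div]
    refine Finset.sum_le_sum fun x _ => ?_
    have := mul_nonneg hw (hR x)
    nlinarith [mul_nonneg this (sq_nonneg ((∑ k, u k * (Fvec Par x q k - q k)) -
      (∑ k, v k * (Fvec Par x q k - q k))))]
  linarith

lemma aux_pt_pos (r u : ℝ) (hr : 1 ≤ r) (hu : 0 ≤ u) :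
    u ^ 2 ≤ 4 * r ^ 2 * (1 + Real.exp (r * u - 2 * r ^ 2)) := by
  have hr0 : 0 < r := by linarith
  rcases le_total u (2 * r) with h | h
  · have := Real.exp_pos (r * u - 2 * r ^ 2)
    have h4 : u ^ 2 ≤ (2 * r) ^ 2 := pow_le_pow_left₀ hu h 2
    nlinarith [mul_pos (pow_pos hr0 2) this]
  · have h1 : u / (2 * r) ≤ Real.exp (u / (2 * r) - 1) := by
      have := Real.add_one_le_exp (u / (2 * r) - 1); linarith
    have h1' : 1 ≤ u / (2 * r) := by rw [le_div_iff₀ (by positivity)]; linarith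
    have h2 : u / (2 * r) - 1 ≤ (r * u - 2 * r ^ 2) / 2 := by
      have : (r * u - 2 * r ^ 2) / 2 = r ^ 2 * (u / (2 * r) - 1) := by field_simp
      rw [this]
      exact le_mul_of_one_le_left (by linarith) (one_le_pow₀ hr)
    have h3 := h1.trans (Real.exp_le_exp.2 h2)
    have h4 : (u / (2 * r)) ^ 2 ≤ Real.exp ((r * u - 2 * r ^ 2) / 2) ^ 2 :=
      pow_le_pow_left₀ (by linarith) h3 2
    rw [← Real.exp_nat_mul, div_pow, div_le_iff₀ (by positivity)] at h4
    have e : ((2:ℕ):ℝ) * ((r * u - 2 * r ^ 2) / 2) = r * u - 2 * r ^ 2 := by push_cast; ring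
    rw [e] at h4
    nlinarith [sq_nonneg r]

lemma aux_pt (r z : ℝ) (hr : 1 ≤ r) :
    z ^ 2 ≤ 4 * r ^ 2 +
      4 * r ^ 2 * Real.exp (- (2 * r ^ 2)) * (Real.exp (r * z) + Real.exp (-r * z)) := by
  have e := aux_pt_pos r |z| hr (abs_nonneg z)
  rw [sq_abs, sub_eq_add_neg, Real.exp_add] at e
  have h : Real.exp (r * |z|) ≤ Real.exp (r * z) + Real.exp (-r * z) := by
    rcases abs_cases z with ⟨h, _⟩ | ⟨h, _⟩
    · rw [h]; linarith [Real.exp_pos (-r * z)]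
    · rw [h, mul_neg, neg_mul]; linarith [Real.exp_pos (r * z)]
  have := mul_le_mul_of_nonneg_left h
    (by positivity : 0 ≤ 4 * r ^ 2 * Real.exp (- (2 * r ^ 2)))
  linarith

theorem subtractive_error_covM_spectral_bound :
    ∃ C : ℝ, 0 < C ∧ ∃ ε₀ : ℝ, ε₀ ∈ Set.Ioo (0:ℝ) 1 ∧
      ∀ (d : ℕ), 1 ≤ d → ∀ (Par : Fin d → Finset (Fin d)),
        (∀ i : Fin d, ∀ j ∈ Par i, j < i) →
        ∀ (ε : ℝ), ε ∈ Set.Ioo 0 ε₀ →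
        ∀ (p q : BNIdx d Par → ℝ),
          (∀ k, p k ∈ Set.Icc (0:ℝ) 1) → (∀ k, q k ∈ Set.Icc (0:ℝ) 1) →
        ∀ (L : (Fin d → Bool) → ℝ), IsProbDist L →
        ∀ (wL wP : ℝ), 0 ≤ wL → wL ≤ 2 * ε → 0 < wP → wP ≤ 2 →
          (∀ x, wL * L x ≤ wP * bnDist Par p x) →
          wL * specNorm (covM Par L q) ≤
            C * (ε * Real.log (1 / ε) +
              ε * enorm2 (fun k : BNIdx d Par => p k - q k) ^ 2) := by
  refine ⟨48, by norm_num, 1/3, by norm_num, ?_⟩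
  intro d _ Par hPar ε hε p q hp hq L hL wL wP hwL hwL2 hwP hwP2 hdom
  obtain ⟨hε0, hε1⟩ := hε
  set s := Real.log (1 / ε) with hs
  have hs1 : 1 ≤ s := by
    rw [hs, Real.le_log_iff_exp_le (by positivity)]
    have : 3 ≤ 1 / ε := by rw [le_div_iff₀ hε0]; linarith
    linarith [Real.exp_one_lt_d9]
  have hes : Real.exp (-s) = ε := by
    rw [hs, one_div, Real.log_inv, neg_neg, Real.exp_log hε0]
  set D := ∑ k, (p k - q k) ^ 2 with hD
  have hD0 : 0 ≤ D := Finset.sum_nonneg fun _ _ => sq_nonneg _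
  have hen : enorm2 (fun k : BNIdx d Par => p k - q k) ^ 2 = D := Real.sq_sqrt hD0
  rw [hen]
  refine aux_spec Par L q hL.1 wL _ hwL (by positivity) ?_
  intro v hv
  set r := Real.sqrt s with hr
  have hr1 : 1 ≤ r := Real.one_le_sqrt.2 hs1
  have hr2 : r ^ 2 = s := Real.sq_sqrt (by linarith)
  let Z : (Fin d → Bool) → ℝ := fun x => ∑ k, v k * (Fvec Par x p k - p k)
  have hmgf : ∀ t : ℝ, t ^ 2 = s →
      ∑ x, bnDist Par p x * Real.exp (t * Z x) ≤ Real.exp (s / 2) := by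
    intro t ht
    have := aux_mgf Par hPar p (fun k => t * v k) hp
    simp only [mul_pow, mul_assoc, ← Finset.mul_sum, hv, ht, mul_one] at this
    exact this
  have hsum : ∑ x, wL * L x ≤ 2 * ε := by rw [← Finset.mul_sum, hL.2]; linarith
  have hW : ∀ x, 0 ≤ wL * L x := fun x => mul_nonneg hwL (hL.1 x)
  have hP0 := aux_bn_nonneg Par p hp
  have hWP : ∀ x, wL * L x ≤ 2 * bnDist Par p x := fun x =>
    (hdom x).trans (mul_le_mul_of_nonneg_right hwP2 (hP0 x))
  have hpt : ∀ x, (∑ k, v k * (Fvec Par x q k - q k)) ^ 2 ≤ 2 * Z x ^ 2 + 2 * D := by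
    intro x
    let c : BNIdx d Par → ℝ := fun k => if cfgOf Par x k.1 = k.2 then p k - q k else 0
    have e : ∑ k, v k * (Fvec Par x q k - q k) = Z x + ∑ k, v k * c k := by
      simp only [Z, c]
      rw [← Finset.sum_add_distrib]
      refine Finset.sum_congr rfl fun k _ => ?_
      simp only [Fvec]
      split_ifs <;> ring
    have hcs : (∑ k, v k * c k) ^ 2 ≤ D := by
      have := Finset.sum_mul_sq_le_sq_mul_sq Finset.univ v c
      rw [hv, one_mul] at this
      refine this.trans (Finset.sum_le_sum fun k _ => ?_)
      simp only [c]
      split_ifs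
      · exact le_rfl
      · simpa using sq_nonneg (p k - q k)
    rw [e]
    nlinarith [sq_nonneg (Z x - ∑ k, v k * c k)]
  set B := 4 * s * Real.exp (-(2 * s)) with hB
  have hB0 : 0 ≤ B := by positivity
  have hpt2 : ∀ x, wL * L x * (∑ k, v k * (Fvec Par x q k - q k)) ^ 2 ≤
      (8 * s + 2 * D) * (wL * L x) +
        4 * B * (bnDist Par p x * Real.exp (r * Z x) + bnDist Par p x * Real.exp (-r * Z x)) := by
    intro x
    have h1 := aux_pt r (Z x) hr1
    rw [hr2] at h1
    have h2 := mul_le_mul_of_nonneg_left (hpt x) (hW x)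
    have h3 := mul_le_mul_of_nonneg_left h1 (hW x)
    have h4 := mul_le_mul_of_nonneg_right (hWP x)
      (by positivity : 0 ≤ B * (Real.exp (r * Z x) + Real.exp (-r * Z x)))
    linarith
  have h5 : ∑ x, wL * L x * (∑ k, v k * (Fvec Par x q k - q k)) ^ 2 ≤
      (8 * s + 2 * D) * (2 * ε) + 4 * B * (Real.exp (s / 2) + Real.exp (s / 2)) := by
    refine (Finset.sum_le_sum fun x _ => hpt2 x).trans ?_
    rw [Finset.sum_add_distrib, ← Finset.mul_sum, ← Finset.mul_sum, ← Finset.mul_sum,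
      Finset.sum_add_distrib]
    rw [← Finset.mul_sum] at hsum
    have h6 := hmgf r hr2
    have h7 := hmgf (-r) (by rw [neg_sq, hr2])
    gcongr
  have h8 : B * Real.exp (s / 2) ≤ 4 * s * ε := by
    rw [hB, mul_assoc, ← Real.exp_add, ← hes]
    refine mul_le_mul_of_nonneg_left (Real.exp_le_exp.2 ?_) (by positivity)
    linarith
  have : 0 ≤ ε * D := by positivity
  nlinarith
end
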